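/- arXiv:0910.4715 — 4 statements merged into one kernel-verified Lean document; each statement's English description precedes it below -/
import Mathlib

section
/- Let m, n be natural numbers with 0 ≤ m ≤ n, and let x > 1 be real. Then d^m/dx^m [P_n(x)·log(x+1)] = P_n^{(m)}(x)·log(x+1) + (ψ(n+1) − ψ(n−m+1))·P_n^{(m)}(x) − 2^{−m} Σ_{k=0}^{n−m} ((k+n+m)!·ψ(k+n+m+1))/(k!·(k+m)!·(n−m−k)!) · ((x−1)/2)^k + ((n+m)!/(n−m)!)·(x+1)^{−m} Σ_{k=0}^{n} ((k+n)!·ψ(k+n+1))/(k!·(k+m)!·(n−k)!) · ((x−1)/2)^k. -/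
open Finset Real

/-- The Legendre polynomial `P_n`, via its explicit expansion
`P_n(x) = ∑_{k=0}^{n} ((n+k)!/((k!)² (n−k)!)) ((x−1)/2)^k`. -/
noncomputable def legendreP (n : ℕ) (x : ℝ) : ℝ :=
  ∑ k ∈ Finset.range (n + 1),
    (((n + k).factorial : ℝ) / (((k.factorial : ℝ)) ^ 2 * ((n - k).factorial : ℝ))) *
      ((x - 1) / 2) ^ k

/-- The harmonic number `H_i = ∑_{r=1}^{i} 1/r`. -/
noncomputable def harm (i : ℕ) : ℝ := ∑ r ∈ Finset.range i, (1 : ℝ) / (r + 1)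

/-- The digamma function at a positive integer `j`: `ψ(j) = H_{j−1} − γ`. -/
noncomputable def psi (j : ℕ) : ℝ := harm (j - 1) - Real.eulerMascheroniConstant

/-- Sum appearing in `P_n^{(m)}`, with weight `h`. -/
noncomputable def auxA (n m : ℕ) (h : ℕ → ℝ) (x : ℝ) : ℝ :=
  (2 : ℝ) ^ (-(m : ℤ)) * ∑ k ∈ Finset.range (n - m + 1),
            (((k + n + m).factorial : ℝ) * h (k + n + m + 1)) /
                ((k.factorial : ℝ) * ((k + m).factorial : ℝ) * ((n - m - k).factorial : ℝ)) *
              ((x - 1) / 2) ^ k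

/-- The Euler-transformed sum, with weight `h`. -/
noncomputable def auxB (n m : ℕ) (h : ℕ → ℝ) (x : ℝ) : ℝ :=
          ∑ k ∈ Finset.range (n + 1),
            (((k + n).factorial : ℝ) * h (k + n + 1)) /
                ((k.factorial : ℝ) * ((k + m).factorial : ℝ) * ((n - k).factorial : ℝ)) *
              ((x - 1) / 2) ^ k

lemma hasDerivAt_psum (N : ℕ) (a : ℕ → ℝ) (x : ℝ) :
    HasDerivAt (fun x : ℝ => ∑ k ∈ Finset.range (N + 1), a k * ((x - 1) / 2) ^ k)
      (∑ k ∈ Finset.range N, (a (k + 1) * (k + 1) / 2) * ((x - 1) / 2) ^ k) x := by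
  have h1 : HasDerivAt (fun x : ℝ => (x - 1) / 2) (1 / 2) x :=
    ((hasDerivAt_id x).sub_const 1).div_const 2
  have h2 : HasDerivAt (fun x : ℝ => ∑ k ∈ Finset.range (N + 1), a k * ((x - 1) / 2) ^ k)
      (∑ k ∈ Finset.range (N + 1), a k * ((k : ℝ) * ((x - 1) / 2) ^ (k - 1) * (1 / 2))) x := by
    apply HasDerivAt.fun_sum
    intro k _
    exact (h1.pow k).const_mul (a k)
  refine h2.congr_deriv (Eq.symm ?_)
  rw [Finset.sum_range_succ']
  simp only [Nat.cast_zero, zero_mul, mul_zero, add_zero, Nat.add_sub_cancel]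
  apply Finset.sum_congr rfl
  intro k _
  push_cast
  ring

lemma hasDerivAt_auxA (n m : ℕ) (hm : m + 1 ≤ n) (h : ℕ → ℝ) (x : ℝ) :
    HasDerivAt (auxA n m h) (auxA n (m + 1) h x) x := by
  obtain ⟨d, rfl⟩ := Nat.exists_eq_add_of_le hm
  have h1 := (hasDerivAt_psum (m + 1 + d - m) (fun k =>
    (((k + (m + 1 + d) + m).factorial : ℝ) * h (k + (m + 1 + d) + m + 1)) /
                ((k.factorial : ℝ) * ((k + m).factorial : ℝ) *
                  ((m + 1 + d - m - k).factorial : ℝ))) x).const_mul ((2 : ℝ) ^ (-(m : ℤ)))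
  unfold auxA
  refine h1.congr_deriv (Eq.symm ?_)
  have e1 : m + 1 + d - (m + 1) + 1 = m + 1 + d - m := by omega
  rw [e1]
  have e2 : (2 : ℝ) ^ (-((m + 1 : ℕ) : ℤ)) = (2 : ℝ) ^ (-(m : ℤ)) * (1 / 2) := by
    push_cast
    rw [neg_add, zpow_add₀ two_ne_zero]
    norm_num
  rw [e2, mul_assoc, Finset.mul_sum]
  congr 1
  apply Finset.sum_congr rfl
  intro k _
  have e3 : m + 1 + d - (m + 1) - k = m + 1 + d - m - (k + 1) := by omega
  have e4 : k + (m + 1 + d) + (m + 1) = k + 1 + (m + 1 + d) + m := by omega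
  have e5 : k + (m + 1) = k + 1 + m := by omega
  rw [e3, e4, e5, Nat.factorial_succ k]
  have := Nat.factorial_ne_zero k
  have := Nat.factorial_ne_zero (k + 1 + m)
  have := Nat.factorial_ne_zero (m + 1 + d - m - (k + 1))
  push_cast
  field_simp

lemma hasDerivAt_auxB (n m : ℕ) (h : ℕ → ℝ) (e : ℝ)
    (hh : ∀ j, h (j + 2) = h (j + 1) + e / (j + 1)) (x : ℝ) (hx : 1 < x) :
    HasDerivAt (auxB n m h) ((m * auxB n m h x + (n + m + 1) * (n - m) * auxB n (m + 1) h x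
      + e * ((n + m + 1) * auxB n (m + 1) (fun _ => 1) x - auxB n m (fun _ => 1) x)) / (x + 1)) x := by
  have h1 := (hasDerivAt_psum n (fun k =>
    (((k + n).factorial : ℝ) * h (k + n + 1)) /
                ((k.factorial : ℝ) * ((k + m).factorial : ℝ) * ((n - k).factorial : ℝ))) x)
  unfold auxB
  refine h1.congr_deriv (Eq.symm ?_)
  have hx1 : x + 1 ≠ 0 := by linarith
  rw [div_eq_iff hx1]
  set t := (x - 1) / 2 with ht
  have hxt : x + 1 = 2 * (1 + t) := by rw [ht]; ring
  rw [hxt]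
  -- derivative, extended sum
  have h3 : ∑ k ∈ Finset.range n, ((((k + 1 + n).factorial : ℝ) * h (k + 1 + n + 1)) /
        (((k + 1).factorial : ℝ) * ((k + 1 + m).factorial : ℝ) * ((n - (k + 1)).factorial : ℝ))
          * (k + 1) / 2) * t ^ k
      = ∑ k ∈ Finset.range (n + 1), (((k + n).factorial : ℝ) * (k + n + 1) * (n - k)
          * (h (k + n + 1) + e / (k + n + 1))) /
        ((k.factorial : ℝ) * ((k + (m + 1)).factorial : ℝ) * ((n - k).factorial : ℝ)) / 2
           * t ^ k := by
    rw [Finset.sum_range_succ, sub_self]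
    simp only [mul_zero, zero_mul, zero_div, add_zero]
    apply Finset.sum_congr rfl
    intro k hk
    have hk := Finset.mem_range.1 hk
    obtain ⟨d, rfl⟩ := Nat.exists_eq_add_of_lt hk
    have a1 : k + d + 1 - (k + 1) = d := by omega
    have a2 : k + d + 1 - k = d + 1 := by omega
    have a3 : k + 1 + (k + d + 1) = (k + (k + d + 1)) + 1 := by omega
    have a4 : k + (m + 1) = k + 1 + m := by omega
    rw [a1, a2, a3, a4, hh, Nat.factorial_succ k, Nat.factorial_succ d,
      Nat.factorial_succ (k + (k + d + 1))]
    have := Nat.factorial_ne_zero k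
    have := Nat.factorial_ne_zero d
    have := Nat.factorial_ne_zero (k + 1 + m)
    have : (k : ℝ) + (k + d + 1) + 1 ≠ 0 := by positivity
    push_cast
    field_simp
    ring
  have h4 : t * ∑ k ∈ Finset.range n, ((((k + 1 + n).factorial : ℝ) * h (k + 1 + n + 1)) /
        (((k + 1).factorial : ℝ) * ((k + 1 + m).factorial : ℝ) * ((n - (k + 1)).factorial : ℝ))
          * (k + 1) / 2) * t ^ k
      = ∑ k ∈ Finset.range (n + 1), ((((k + n).factorial : ℝ) * h (k + n + 1)) /
        ((k.factorial : ℝ) * ((k + m).factorial : ℝ) * ((n - k).factorial : ℝ))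
          * k / 2) * t ^ k := by
    rw [Finset.sum_range_succ', Finset.mul_sum]
    simp only [Nat.cast_zero, zero_mul, mul_zero, add_zero, zero_div]
    apply Finset.sum_congr rfl
    intro k _
    push_cast
    ring
  have h5 : ∀ S : ℝ, S * (2 * (1 + t)) = 2 * S + 2 * (t * S) := fun S => by ring
  rw [h5, h4, h3]
  simp only [Finset.mul_sum, ← Finset.sum_add_distrib, ← Finset.sum_sub_distrib]
  apply Finset.sum_congr rfl
  intro k _
  have a4 : k + (m + 1) = k + m + 1 := by omega
  rw [a4, Nat.factorial_succ (k + m)]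
  have := Nat.factorial_ne_zero k
  have := Nat.factorial_ne_zero (k + m)
  have := Nat.factorial_ne_zero (n - k)
  have : (k : ℝ) + n + 1 ≠ 0 := by positivity
  have : (k : ℝ) + m + 1 ≠ 0 := by positivity
  push_cast
  field_simp
  ring

lemma legendreP_eq (n : ℕ) : legendreP n = auxA n 0 (fun _ => 1) := by
  funext x
  unfold legendreP auxA
  simp only [Nat.cast_zero, neg_zero, zpow_zero, one_mul, Nat.sub_zero, add_zero, mul_one]
  apply Finset.sum_congr rfl
  intro k _
  rw [add_comm n k, sq]

lemma iter_legendreP (m n : ℕ) (hmn : m ≤ n) :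
    iteratedDeriv m (legendreP n) = auxA n m (fun _ => 1) := by
  induction m with
  | zero => rw [iteratedDeriv_zero, legendreP_eq]
  | succ m ih =>
    rw [iteratedDeriv_succ, ih (by omega)]
    funext x
    exact (hasDerivAt_auxA n m hmn _ x).deriv

lemma auxA_zero (n : ℕ) (h : ℕ → ℝ) (x : ℝ) : auxA n 0 h x = auxB n 0 h x := by
  simp [auxA, auxB]

lemma fact_ratio (n m : ℕ) (hm : m + 1 ≤ n) :
    ((n + (m + 1)).factorial : ℝ) / ((n - (m + 1)).factorial : ℝ)
      = (n + m + 1) * (n - m) * (((n + m).factorial : ℝ) / ((n - m).factorial : ℝ)) := by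
  obtain ⟨d, rfl⟩ := Nat.exists_eq_add_of_le hm
  have a1 : m + 1 + d - (m + 1) = d := by omega
  have a2 : m + 1 + d - m = d + 1 := by omega
  have a3 : m + 1 + d + (m + 1) = m + 1 + d + m + 1 := by omega
  rw [a1, a2, a3, Nat.factorial_succ d, Nat.factorial_succ (m + 1 + d + m)]
  have := Nat.factorial_ne_zero d
  push_cast
  field_simp
  ring

lemma hasDerivAt_zp (m : ℕ) (x : ℝ) (hx : 1 < x) :
    HasDerivAt (fun x : ℝ => (x + 1) ^ (-(m : ℤ))) (-(m : ℝ) * (x + 1) ^ (-(m : ℤ)) / (x + 1)) x := by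
  have hx1 : x + 1 ≠ 0 := by linarith
  have h := (hasDerivAt_zpow (-(m : ℤ)) (x + 1) (Or.inl hx1)).comp x
    ((hasDerivAt_id x).add_const 1)
  refine h.congr_deriv (Eq.symm ?_)
  rw [zpow_sub_one₀ hx1]
  push_cast
  field_simp

lemma zp_succ (m : ℕ) (x : ℝ) (hx : 1 < x) :
    (x + 1) ^ (-((m + 1 : ℕ) : ℤ)) = (x + 1) ^ (-(m : ℤ)) / (x + 1) := by
  have hx1 : x + 1 ≠ 0 := by linarith
  push_cast
  rw [neg_add, ← sub_eq_add_neg, zpow_sub_one₀ hx1]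
  rfl

/-- Euler transformation. -/
lemma auxA_eq_auxB (m n : ℕ) (hmn : m ≤ n) : ∀ x : ℝ, 1 < x →
    auxA n m (fun _ => 1) x =
      ((n + m).factorial : ℝ) / ((n - m).factorial : ℝ) * (x + 1) ^ (-(m : ℤ)) *
        auxB n m (fun _ => 1) x := by
  induction m with
  | zero =>
    intro x _
    have := Nat.factorial_ne_zero n
    simp [auxA_zero]
    field_simp
  | succ m ih =>
    intro x hx
    have hx1 : x + 1 ≠ 0 := by linarith
    have h1 := hasDerivAt_auxA n m hmn (fun _ => 1) x
    have h2 := ((hasDerivAt_zp m x hx).const_mul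
      (((n + m).factorial : ℝ) / ((n - m).factorial : ℝ))).mul
      (hasDerivAt_auxB n m (fun _ => 1) 0 (by simp) x hx)
    have h3 := h2.congr_of_eventuallyEq
      (Filter.eventually_of_mem (Ioi_mem_nhds hx) (fun y hy => ih (by omega) y hy))
    rw [h1.unique h3, fact_ratio n m hmn, zp_succ m x hx]
    generalize auxB n m _ x = b
    generalize auxB n (m + 1) _ x = b'
    generalize ((n + m).factorial : ℝ) / ((n - m).factorial : ℝ) = c
    field_simp
    ring

lemma psi_succ (j : ℕ) : psi (j + 2) = psi (j + 1) + 1 / (j + 1) := by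
  simp only [psi, harm]
  rw [show j + 2 - 1 = j + 1 by omega, Nat.add_sub_cancel, Finset.sum_range_succ]
  ring

lemma main_aux (m n : ℕ) (hmn : m ≤ n) : ∀ x : ℝ, 1 < x →
    iteratedDeriv m (fun y => legendreP n y * Real.log (y + 1)) x =
      auxA n m (fun _ => 1) x * Real.log (x + 1)
      + (psi (n + 1) - psi (n - m + 1)) * auxA n m (fun _ => 1) x
      - auxA n m psi x
      + ((n + m).factorial : ℝ) / ((n - m).factorial : ℝ) * (x + 1) ^ (-(m : ℤ)) *
          auxB n m psi x := by
  induction m with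
  | zero =>
    intro x _
    have := Nat.factorial_ne_zero n
    rw [iteratedDeriv_zero, legendreP_eq, auxA_zero n psi]
    simp
    field_simp
    ring
  | succ m ih =>
    intro x hx
    have hx1 : x + 1 ≠ 0 := by linarith
    have hlog : HasDerivAt (fun x : ℝ => Real.log (x + 1)) (1 / (x + 1)) x :=
      ((hasDerivAt_id x).add_const 1).log hx1
    have hA := hasDerivAt_auxA n m hmn (fun _ => 1) x
    have hP := hasDerivAt_auxA n m hmn psi x
    have h2 := ((hasDerivAt_zp m x hx).const_mul
      (((n + m).factorial : ℝ) / ((n - m).factorial : ℝ))).mul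
      (hasDerivAt_auxB n m psi 1 psi_succ x hx)
    have h3 := ((((hA.mul hlog).add
      (hA.const_mul (psi (n + 1) - psi (n - m + 1)))).sub hP).add h2).congr_of_eventuallyEq
      (Filter.eventually_of_mem (Ioi_mem_nhds hx) (fun y hy => ih (by omega) y hy))
    rw [iteratedDeriv_succ, h3.deriv]
    have hpsi : psi (n - m + 1) = psi (n - (m + 1) + 1) + 1 / ((n : ℝ) - m) := by
      obtain ⟨d, rfl⟩ := Nat.exists_eq_add_of_le hmn
      rw [show m + 1 + d - m + 1 = d + 2 by omega, show m + 1 + d - (m + 1) = d by omega,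
        psi_succ]
      push_cast
      ring_nf
    have hnm : (n : ℝ) - m ≠ 0 := by
      have : ((m + 1 : ℕ) : ℝ) ≤ n := by exact_mod_cast hmn
      push_cast at this
      intro h
      linarith
    rw [hpsi, auxA_eq_auxB m n (by omega) x hx, auxA_eq_auxB (m + 1) n hmn x hx,
      fact_ratio n m hmn, zp_succ m x hx]
    generalize auxB n m psi x = b
    generalize auxB n (m + 1) psi x = b'
    generalize auxB n m _ x = g
    generalize auxB n (m + 1) _ x = g'
    generalize ((n + m).factorial : ℝ) / ((n - m).factorial : ℝ) = c
    field_simp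
    ring

theorem stmt_0 (m n : ℕ) (hmn : m ≤ n) (x : ℝ) (hx : 1 < x) :
    iteratedDeriv m (fun y => legendreP n y * Real.log (y + 1)) x =
      iteratedDeriv m (legendreP n) x * Real.log (x + 1)
      + (psi (n + 1) - psi (n - m + 1)) * iteratedDeriv m (legendreP n) x
      - (2 : ℝ) ^ (-(m : ℤ)) *
          ∑ k ∈ Finset.range (n - m + 1),
            (((k + n + m).factorial : ℝ) * psi (k + n + m + 1)) /
                ((k.factorial : ℝ) * ((k + m).factorial : ℝ) * ((n - m - k).factorial : ℝ)) *
              ((x - 1) / 2) ^ k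
      + ((n + m).factorial : ℝ) / ((n - m).factorial : ℝ) * (x + 1) ^ (-(m : ℤ)) *
          ∑ k ∈ Finset.range (n + 1),
            (((k + n).factorial : ℝ) * psi (k + n + 1)) /
                ((k.factorial : ℝ) * ((k + m).factorial : ℝ) * ((n - k).factorial : ℝ)) *
              ((x - 1) / 2) ^ k := by
  rw [iter_legendreP m n hmn]
  exact main_aux m n hmn x hx
end

section
/- Let m, n be natural numbers with 0 ≤ m ≤ n, and let x > 1 be real. Then d^m/dx^m [P_n(x)·log(x−1)] = P_n^{(m)}(x)·log(x−1) − (ψ(n+m+1) − 2ψ(n+1) + ψ(n−m+1))·P_n^{(m)}(x) − (−1)^{n+m}·2^{−m} Σ_{k=0}^{n−m} (−1)^k·((k+n+m)!·ψ(k+m+1))/(k!·(k+m)!·(n−m−k)!) · ((x+1)/2)^k + (−1)^n·((n+m)!/(n−m)!)·(x−1)^{−m} Σ_{k=0}^{n} (−1)^k·((k+n)!·ψ(k+m+1))/(k!·(k+m)!·(n−k)!) · ((x+1)/2)^k. -/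
open Finset Real

/-- rising factorial -/
noncomputable def RF : ℕ → ℝ → ℝ
  | 0, _ => 1
  | N + 1, z => (z + N) * RF N z

/-- derivative of the rising factorial -/
noncomputable def DF : ℕ → ℝ → ℝ
  | 0, _ => 0
  | N + 1, z => (z + N) * DF N z + RF N z

theorem psi_step (j : ℕ) : psi (j + 1 + 1) = psi (j + 1) + 1 / ((j : ℝ) + 1) := by
  simp only [psi, harm, Nat.add_sub_cancel, Finset.sum_range_succ]
  ring

theorem RF_low (N : ℕ) : ∀ r : ℕ,
    RF N (-((N + r : ℕ) : ℝ)) = (-1) ^ N * ((N + r).factorial : ℝ) / (r.factorial : ℝ) := by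
  induction N with
  | zero => intro r; simp [RF, Nat.factorial_ne_zero]
  | succ N ih =>
    intro r
    have h := ih (r + 1)
    have e : N + 1 + r = N + (r + 1) := by ring
    rw [e, RF, h]
    have : (r.factorial : ℝ) ≠ 0 := by positivity
    have : (r : ℝ) + 1 ≠ 0 := by positivity
    rw [Nat.factorial_succ r]
    push_cast
    field_simp
    ring

theorem DF_low (N : ℕ) : ∀ r : ℕ,
    DF N (-((N + r : ℕ) : ℝ)) = -((-1) ^ N * ((N + r).factorial : ℝ) / (r.factorial : ℝ))
      * (psi (N + r + 1) - psi (r + 1)) := by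
  induction N with
  | zero => intro r; simp [DF]
  | succ N ih =>
    intro r
    have h := ih (r + 1)
    have e : N + 1 + r = N + (r + 1) := by ring
    rw [e, DF, h, RF_low, psi_step r]
    have : (r.factorial : ℝ) ≠ 0 := by positivity
    have : (r : ℝ) + 1 ≠ 0 := by positivity
    rw [Nat.factorial_succ r]
    push_cast
    field_simp
    ring

theorem RF_high (p q : ℕ) : RF (p + 1 + q) (-(p : ℝ)) = 0 := by
  induction q with
  | zero => simp [RF]
  | succ q ih => rw [← add_assoc, RF, ih, mul_zero]

theorem DF_high (p q : ℕ) :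
    DF (p + 1 + q) (-(p : ℝ)) = (-1) ^ p * (p.factorial : ℝ) * (q.factorial : ℝ) := by
  induction q with
  | zero =>
    have := RF_low p 0
    simp at this
    simp [DF, this]
  | succ q ih =>
    rw [← add_assoc, DF, ih, RF_high, Nat.factorial_succ]
    push_cast
    ring

/-- The basic alternating sum. -/
noncomputable def TS (N A c : ℕ) : ℝ :=
  ∑ i ∈ Finset.range (N + 1), (-1 : ℝ) ^ i * (N.choose i : ℝ) *
    (((A + i).factorial : ℝ) / ((c + i).factorial : ℝ) * psi (c + i + 1))

theorem TS_succ (N A c : ℕ) : TS (N + 1) A c = TS N A c - TS N (A + 1) (c + 1) := by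
  unfold TS
  rw [Finset.sum_range_succ' _ (N + 1)]
  have h1 : ∀ i ∈ Finset.range (N + 1), (-1 : ℝ) ^ (i + 1) * ((N + 1).choose (i + 1) : ℝ) *
      (((A + (i + 1)).factorial : ℝ) / ((c + (i + 1)).factorial : ℝ) * psi (c + (i + 1) + 1))
      = (-1 : ℝ) ^ (i + 1) * (N.choose (i + 1) : ℝ) *
      (((A + (i + 1)).factorial : ℝ) / ((c + (i + 1)).factorial : ℝ) * psi (c + (i + 1) + 1))
      - (-1 : ℝ) ^ i * (N.choose i : ℝ) *
    (((A + 1 + i).factorial : ℝ) / ((c + 1 + i).factorial : ℝ) * psi (c + 1 + i + 1)) := by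
    intro i _
    rw [Nat.choose_succ_succ, show A + 1 + i = A + (i + 1) by ring,
      show c + 1 + i = c + (i + 1) by ring]
    push_cast
    ring
  have h2 := Finset.sum_range_succ' (fun i => (-1 : ℝ) ^ i * (N.choose i : ℝ) *
    (((A + i).factorial : ℝ) / ((c + i).factorial : ℝ) * psi (c + i + 1))) (N + 1)
  rw [Finset.sum_range_succ _ (N + 1), Nat.choose_succ_self] at h2
  rw [Finset.sum_congr rfl h1, Finset.sum_sub_distrib]
  simp only [Nat.choose_zero_right, Nat.cast_zero, mul_zero, zero_mul, add_zero] at h2 ⊢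
  linear_combination -h2

theorem TS_closed (N : ℕ) : ∀ A c : ℕ, TS N A c = (A.factorial : ℝ) / ((c + N).factorial : ℝ) *
    (RF N ((c : ℝ) - A) * psi (c + N + 1) - DF N ((c : ℝ) - A)) := by
  induction N with
  | zero => intro A c; simp [TS, RF, DF]
  | succ N ih =>
    intro A c
    rw [TS_succ, ih, ih]
    rw [show c + 1 + N = c + N + 1 by ring, show c + (N + 1) = c + N + 1 by ring, psi_step,
      RF, DF, show (((c + 1 : ℕ) : ℝ) - ((A + 1 : ℕ) : ℝ)) = (c : ℝ) - A by push_cast; ring,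
      Nat.factorial_succ (c + N), Nat.factorial_succ A]
    have : ((c + N).factorial : ℝ) ≠ 0 := by positivity
    have : (c : ℝ) + N + 1 ≠ 0 := by positivity
    push_cast
    field_simp
    ring

theorem expand_sum (M : ℕ) (b : ℕ → ℝ) (t : ℝ) :
    ∑ k ∈ Finset.range (M + 1), b k * (1 + t) ^ k =
    ∑ j ∈ Finset.range (M + 1), t ^ j *
      ∑ i ∈ Finset.range (M - j + 1), b (j + i) * ((j + i).choose j : ℝ) := by
  have h1 : ∀ k ∈ Finset.range (M + 1), b k * (1 + t) ^ k =
      ∑ j ∈ Finset.range (M + 1), t ^ j * (b k * (k.choose j : ℝ)) := by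
    intro k hk
    rw [add_comm, add_pow, Finset.mul_sum]
    have hs : Finset.range (k + 1) ⊆ Finset.range (M + 1) := by
      intro a ha; simp at *; omega
    rw [← Finset.sum_subset hs]
    · refine Finset.sum_congr rfl fun j _ => ?_
      simp; ring
    · intro j _ hj
      simp at hj
      rw [Nat.choose_eq_zero_of_lt (by omega)]; simp
  rw [Finset.sum_congr rfl h1, Finset.sum_comm]
  refine Finset.sum_congr rfl fun j hj => ?_
  rw [← Finset.mul_sum]
  congr 1
  simp at hj
  rw [show M + 1 = j + (M - j + 1) by omega, Finset.sum_range_add]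
  rw [Finset.sum_eq_zero (s := Finset.range j), zero_add]
  · intro k hk
    simp at hk
    rw [Nat.choose_eq_zero_of_lt hk]; simp

theorem S_expand (M B m : ℕ) (t : ℝ) :
    ∑ k ∈ Finset.range (M + 1),
            (-1 : ℝ) ^ k * (((k + B).factorial : ℝ) * psi (k + m + 1)) /
                ((k.factorial : ℝ) * ((k + m).factorial : ℝ) * ((M - k).factorial : ℝ)) *
              (1 + t) ^ k =
    ∑ j ∈ Finset.range (M + 1), t ^ j *
      ((-1) ^ j / ((j.factorial : ℝ) * ((M - j).factorial : ℝ)) * TS (M - j) (B + j) (j + m)) := by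
  rw [expand_sum]
  refine Finset.sum_congr rfl fun j hj => ?_
  congr 1
  unfold TS
  rw [Finset.mul_sum]
  refine Finset.sum_congr rfl fun i hi => ?_
  simp at hi hj
  obtain ⟨r, rfl⟩ : ∃ r, M = j + i + r := ⟨M - j - i, by omega⟩
  rw [show j + i + r - (j + i) = r by omega, show j + i + r - j = i + r by omega,
    show B + j + i = j + i + B by ring, show j + m + i = j + i + m by ring,
    Nat.cast_add_choose, Nat.cast_add_choose]
  have h1 : ((j + i).factorial : ℝ) ≠ 0 := by positivity
  have h2 : ((i + r).factorial : ℝ) ≠ 0 := by positivity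
  have h3 : ((j + i + m).factorial : ℝ) ≠ 0 := by positivity
  have h4 : (j.factorial : ℝ) ≠ 0 := by positivity
  have h5 : (i.factorial : ℝ) ≠ 0 := by positivity
  have h6 : (r.factorial : ℝ) ≠ 0 := by positivity
  rw [pow_add]
  field_simp

theorem iter_aux (f : ℕ → ℝ → ℝ)
    (hf : ∀ m, ∀ x : ℝ, 1 < x → HasDerivAt (f m) (f (m + 1) x) x) (m : ℕ) :
    ∀ x : ℝ, 1 < x → iteratedDeriv m (f 0) x = f m x := by
  induction m with
  | zero => intro x _; simp
  | succ m ih =>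
    intro x hx
    rw [iteratedDeriv_succ]
    have : iteratedDeriv m (f 0) =ᶠ[nhds x] f m := by
      filter_upwards [lt_mem_nhds hx] with y hy using ih y hy
    rw [this.deriv_eq, (hf m x hx).deriv]

theorem deriv_term (k m : ℕ) (x : ℝ) (hx : 1 < x) (α β : ℝ) :
    HasDerivAt (fun y => (-1 : ℝ) ^ m * (y - 1) ^ ((k : ℤ) - m) *
      (α * (RF m (-(k : ℝ)) * Real.log (y - 1) - DF m (-(k : ℝ))) + β * RF m (-(k : ℝ))))
      ((-1 : ℝ) ^ (m + 1) * (x - 1) ^ ((k : ℤ) - (m + 1 : ℕ)) *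
      (α * (RF (m + 1) (-(k : ℝ)) * Real.log (x - 1) - DF (m + 1) (-(k : ℝ)))
        + β * RF (m + 1) (-(k : ℝ)))) x := by
  have hx0 : x - 1 ≠ 0 := by linarith
  have h0 : HasDerivAt (fun y : ℝ => y - 1) 1 x := (hasDerivAt_id x).sub_const 1
  have h1 : HasDerivAt (fun y : ℝ => (y - 1) ^ ((k : ℤ) - m))
      ((((k : ℤ) - m : ℤ) : ℝ) * (x - 1) ^ ((k : ℤ) - m - 1)) x := by
    have := (hasDerivAt_zpow ((k : ℤ) - m) (x - 1) (Or.inl hx0)).comp x h0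
    rw [mul_one] at this
    exact this
  have h2 := h0.log hx0
  have h3 := (h1.const_mul ((-1 : ℝ) ^ m)).mul
    (((((h2.const_mul (RF m (-(k : ℝ)))).sub_const (DF m (-(k : ℝ)))).const_mul α)).add_const
      (β * RF m (-(k : ℝ))))
  refine h3.congr_deriv ?_
  have e : (x - 1) ^ ((k : ℤ) - m) = (x - 1) ^ ((k : ℤ) - m - 1) * (x - 1) := by
    rw [← zpow_add_one₀ hx0]; congr 1; ring
  rw [show (k : ℤ) - (m + 1 : ℕ) = (k : ℤ) - m - 1 by push_cast; ring, e, RF, DF, pow_succ]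
  push_cast
  field_simp
  ring

noncomputable def aC (n k : ℕ) : ℝ :=
  ((n + k).factorial : ℝ) / (((k.factorial : ℝ)) ^ 2 * ((n - k).factorial : ℝ))

theorem iter_gen (n m : ℕ) (α β : ℝ) (x : ℝ) (hx : 1 < x) :
    iteratedDeriv m (fun y => legendreP n y * (α * Real.log (y - 1) + β)) x =
    (x - 1) ^ (-(m : ℤ)) * ∑ k ∈ Finset.range (n + 1), ((x - 1) / 2) ^ k * (aC n k * ((-1) ^ m *
      (α * (RF m (-(k : ℝ)) * Real.log (x - 1) - DF m (-(k : ℝ))) + β * RF m (-(k : ℝ))))) := by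
  have key := iter_aux (fun m y => ∑ k ∈ Finset.range (n + 1), aC n k * (1 / 2) ^ k *
    ((-1 : ℝ) ^ m * (y - 1) ^ ((k : ℤ) - m) *
      (α * (RF m (-(k : ℝ)) * Real.log (y - 1) - DF m (-(k : ℝ))) + β * RF m (-(k : ℝ)))))
    (fun m x hx => HasDerivAt.fun_sum fun k _ => (deriv_term k m x hx α β).const_mul _) m x hx
  have hx0 : x - 1 ≠ 0 := by linarith
  have e : (fun y => legendreP n y * (α * Real.log (y - 1) + β)) =
      fun y => ∑ k ∈ Finset.range (n + 1), aC n k * (1 / 2) ^ k *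
    ((-1 : ℝ) ^ 0 * (y - 1) ^ ((k : ℤ) - (0 : ℕ)) *
      (α * (RF 0 (-(k : ℝ)) * Real.log (y - 1) - DF 0 (-(k : ℝ))) + β * RF 0 (-(k : ℝ)))) := by
    funext y
    rw [legendreP, Finset.sum_mul]
    refine Finset.sum_congr rfl fun k _ => ?_
    simp only [RF, DF, aC, Nat.cast_zero, sub_zero, zpow_natCast, div_pow, one_pow]
    ring
  rw [e, key, Finset.mul_sum]
  refine Finset.sum_congr rfl fun k _ => ?_
  rw [sub_eq_add_neg (k : ℤ), zpow_add₀ hx0, zpow_natCast, div_pow, div_pow, one_pow]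
  ring

theorem coef_low (j q p : ℕ) :
    aC (j + 1 + q + p) j * ((-1) ^ (j + 1 + q) * DF (j + 1 + q) (-(j : ℝ))) =
    - ((-1 : ℝ) ^ (j + 1 + q + p) * ((j + 1 + q + p + (j + 1 + q)).factorial : ℝ)
      / (p.factorial : ℝ) *
      ((-1) ^ j / ((j.factorial : ℝ) * ((j + 1 + q + p - j).factorial : ℝ)) *
        TS (j + 1 + q + p - j) (j + 1 + q + p + j) (j + (j + 1 + q)))) := by
  rw [show j + 1 + q + p - j = p + 1 + q by omega, TS_closed,
    show ((j + (j + 1 + q) : ℕ) : ℝ) - ((j + 1 + q + p + j : ℕ) : ℝ) = -(p : ℝ) by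
      push_cast; ring, RF_high, DF_high, DF_high, aC,
    show j + 1 + q + p - j = p + 1 + q by omega,
    show j + (j + 1 + q) + (p + 1 + q) = j + 1 + q + p + (j + 1 + q) by ring]
  have h1 : (j.factorial : ℝ) ≠ 0 := by positivity
  have h2 : (p.factorial : ℝ) ≠ 0 := by positivity
  have h3 : ((p + 1 + q).factorial : ℝ) ≠ 0 := by positivity
  have h4 : ((j + 1 + q + p + (j + 1 + q)).factorial : ℝ) ≠ 0 := by positivity
  have s1 : (-1 : ℝ) ^ p * (-1) ^ p = 1 := by rw [← mul_pow]; simp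
  rw [pow_add _ (j + 1 + q) p]
  field_simp
  linear_combination (-(q.factorial : ℝ) * (p.factorial : ℝ)) * s1

theorem coef_high (m i r : ℕ) (n : ℕ) (hn : n = m + (i + r)) :
    -(aC n (m + i) * ((-1) ^ m * DF m (-((m + i : ℕ) : ℝ)))) =
    -(psi (n + m + 1) - 2 * psi (n + 1) + psi (i + r + 1)) *
       (aC n (m + i) * ((-1) ^ m * RF m (-((m + i : ℕ) : ℝ))))
    - (-1 : ℝ) ^ (n + m) * ((-1) ^ i / ((i.factorial : ℝ) * (r.factorial : ℝ))
        * TS r (n + m + i) (i + m))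
    + (-1 : ℝ) ^ n * ((n + m).factorial : ℝ) / ((i + r).factorial : ℝ) *
      ((-1) ^ (m + i) / (((m + i).factorial : ℝ) * (r.factorial : ℝ)) *
        TS r (n + (m + i)) (m + i + m)) := by
  rw [TS_closed, TS_closed,
    show ((i + m : ℕ) : ℝ) - ((n + m + i : ℕ) : ℝ) = -((r + (m + i) : ℕ) : ℝ) by
      rw [hn]; push_cast; ring,
    show ((m + i + m : ℕ) : ℝ) - ((n + (m + i) : ℕ) : ℝ) = -((r + i : ℕ) : ℝ) by
      rw [hn]; push_cast; ring, RF_low, DF_low, RF_low, DF_low, RF_low, DF_low, aC,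
    show n - (m + i) = r by omega, show i + m + r = n by omega,
    show m + i + m + r = n + m by omega, show r + (m + i) = n by omega,
    show r + i = i + r by omega, show n + (m + i) = n + m + i by omega]
  have h1 : (i.factorial : ℝ) ≠ 0 := by positivity
  have h2 : (r.factorial : ℝ) ≠ 0 := by positivity
  have h3 : ((i + r).factorial : ℝ) ≠ 0 := by positivity
  have h4 : ((m + i).factorial : ℝ) ≠ 0 := by positivity
  have h5 : ((n + m).factorial : ℝ) ≠ 0 := by positivity
  have h6 : (n.factorial : ℝ) ≠ 0 := by positivity
  have s : ∀ a : ℕ, ((-1 : ℝ) ^ a) ^ 2 = 1 := by intro a; rw [← pow_mul, mul_comm, pow_mul]; simp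
  have e1 : (-1 : ℝ) ^ (n + m) = (-1) ^ i * (-1) ^ r := by
    rw [hn, show m + (i + r) + m = 2 * m + (i + r) by ring, pow_add, pow_mul]; simp [pow_add]
  have e2 : (-1 : ℝ) ^ n * (-1) ^ (m + i) = (-1) ^ r := by
    rw [← pow_add, hn, show m + (i + r) + (m + i) = 2 * (m + i) + r by ring, pow_add, pow_mul]
    simp
  have e3 : (-1 : ℝ) ^ n = (-1) ^ r * (-1) ^ (m + i) := by
    rw [← e2, mul_assoc, ← sq, s, mul_one]
  rw [e1, e3]
  have si := s i
  have sm := s m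
  have sr := s r
  have smi := s (m + i)
  generalize (-1 : ℝ) ^ i = u at *
  generalize (-1 : ℝ) ^ r = v at *
  generalize (-1 : ℝ) ^ (m + i) = w at *
  generalize (-1 : ℝ) ^ m = y at *
  field_simp
  simp only [si, sm, sr, smi]
  ring

theorem stmt_3 (m n : ℕ) (hmn : m ≤ n) (x : ℝ) (hx : 1 < x) :
    iteratedDeriv m (fun y => legendreP n y * Real.log (y - 1)) x =
      iteratedDeriv m (legendreP n) x * Real.log (x - 1)
      - (psi (n + m + 1) - 2 * psi (n + 1) + psi (n - m + 1)) *
          iteratedDeriv m (legendreP n) x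
      - (-1 : ℝ) ^ (n + m) * (2 : ℝ) ^ (-(m : ℤ)) *
          ∑ k ∈ Finset.range (n - m + 1),
            (-1 : ℝ) ^ k * (((k + n + m).factorial : ℝ) * psi (k + m + 1)) /
                ((k.factorial : ℝ) * ((k + m).factorial : ℝ) * ((n - m - k).factorial : ℝ)) *
              ((x + 1) / 2) ^ k
      + (-1 : ℝ) ^ n * ((n + m).factorial : ℝ) / ((n - m).factorial : ℝ) *
            (x - 1) ^ (-(m : ℤ)) *
          ∑ k ∈ Finset.range (n + 1),
            (-1 : ℝ) ^ k * (((k + n).factorial : ℝ) * psi (k + m + 1)) /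
                ((k.factorial : ℝ) * ((k + m).factorial : ℝ) * ((n - k).factorial : ℝ)) *
              ((x + 1) / 2) ^ k := by
  have hx0 : x - 1 ≠ 0 := by linarith
  have g1 := iter_gen n m 1 0 x hx
  have g2 := iter_gen n m 0 1 x hx
  simp only [one_mul, zero_mul, add_zero, zero_add, mul_one] at g1 g2
  change iteratedDeriv m (legendreP n) x = _ at g2
  have hu : (x + 1) / 2 = 1 + (x - 1) / 2 := by ring
  have hm2 : (2 : ℝ) ^ (-(m : ℤ)) = (x - 1) ^ (-(m : ℤ)) * ((x - 1) / 2) ^ m := by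
    rw [zpow_neg, zpow_neg, zpow_natCast, zpow_natCast, div_pow]
    field_simp
  simp only [add_assoc _ n m]
  rw [g1, g2, hu, hm2, S_expand, S_expand]
  generalize (x - 1) / 2 = t
  generalize (x - 1) ^ (-(m : ℤ)) = s
  generalize Real.log (x - 1) = L
  obtain ⟨p, rfl⟩ := Nat.exists_eq_add_of_le hmn
  rw [show m + p - m = p by omega]
  rw [show m + p + 1 = m + (p + 1) by ring]
  simp only [Finset.sum_range_add _ m (p + 1)]
  set n := m + p with hn
  have low : ∀ j ∈ Finset.range m, RF m (-(j : ℝ)) = 0 ∧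
      aC n j * ((-1) ^ m * DF m (-(j : ℝ))) =
      - ((-1 : ℝ) ^ n * ((n + m).factorial : ℝ) / (p.factorial : ℝ) *
      ((-1) ^ j / ((j.factorial : ℝ) * ((n - j).factorial : ℝ)) *
        TS (n - j) (n + j) (j + m))) := by
    intro j hj
    simp at hj
    obtain ⟨q, hq⟩ : ∃ q, m = j + 1 + q := ⟨m - j - 1, by omega⟩
    refine ⟨by rw [hq, RF_high], ?_⟩
    have := coef_low j q p
    rw [← hq, ← hn] at this
    exact this
  have high : ∀ i ∈ Finset.range (p + 1), _ := fun i hi =>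
    coef_high m i (p - i) n (by simp at hi; omega)
  have A1 : ∑ k ∈ Finset.range m, t ^ k * (aC n k * ((-1) ^ m *
      (RF m (-(k : ℝ)) * L - DF m (-(k : ℝ))))) =
      (-1 : ℝ) ^ n * ((n + m).factorial : ℝ) / (p.factorial : ℝ) *
      ∑ j ∈ Finset.range m, t ^ j * ((-1) ^ j / ((j.factorial : ℝ) * ((n - j).factorial : ℝ)) *
        TS (n - j) (n + j) (j + m)) := by
    rw [Finset.mul_sum]
    refine Finset.sum_congr rfl fun j hj => ?_
    obtain ⟨h1, h2⟩ := low j hj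
    rw [h1]
    linear_combination (-t ^ j) * h2
  have A2 : ∑ k ∈ Finset.range m, t ^ k * (aC n k * ((-1) ^ m * RF m (-(k : ℝ)))) = 0 := by
    refine Finset.sum_eq_zero fun j hj => ?_
    rw [(low j hj).1]; ring
  have A3 : ∑ i ∈ Finset.range (p + 1), t ^ (m + i) * (aC n (m + i) * ((-1) ^ m *
      (RF m (-((m + i : ℕ) : ℝ)) * L - DF m (-((m + i : ℕ) : ℝ))))) =
      (L - (psi (n + m + 1) - 2 * psi (n + 1) + psi (p + 1))) *
      ∑ i ∈ Finset.range (p + 1), t ^ (m + i) * (aC n (m + i) * ((-1) ^ m *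
        RF m (-((m + i : ℕ) : ℝ))))
      - (-1 : ℝ) ^ (n + m) * t ^ m * ∑ i ∈ Finset.range (p + 1), t ^ i *
        ((-1) ^ i / ((i.factorial : ℝ) * ((p - i).factorial : ℝ))
        * TS (p - i) (n + m + i) (i + m))
      + (-1 : ℝ) ^ n * ((n + m).factorial : ℝ) / (p.factorial : ℝ) *
      ∑ i ∈ Finset.range (p + 1), t ^ (m + i) *
        ((-1) ^ (m + i) / (((m + i).factorial : ℝ) * ((n - (m + i)).factorial : ℝ)) *
        TS (n - (m + i)) (n + (m + i)) (m + i + m)) := by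
    simp only [Finset.mul_sum]
    rw [← Finset.sum_sub_distrib, ← Finset.sum_add_distrib]
    refine Finset.sum_congr rfl fun i hi => ?_
    have h := high i hi
    simp at hi
    rw [show i + (p - i) = p by omega] at h
    rw [show n - (m + i) = p - i by omega]
    rw [pow_add t m i]
    linear_combination (t ^ m * t ^ i) * h
  rw [A1, A2, A3, show m + (p + 1) = n + 1 from rfl]
  ring
end

section
/- Let m, n be natural numbers with 0 ≤ m ≤ n, and let x > 1 be real. Then d^m/dx^m [P_n(x)·log(x+1)] = P_n^{(m)}(x)·log(x+1) − (−1)^{n+m}·(x+1)^{−m} Σ_{k=0}^{m−1} ((k+n)!·(m−k−1)!)/(k!·(n−k)!) · ((x+1)/2)^k + (−1)^{n+m}·2^{−m} Σ_{k=0}^{n−m} (−1)^k·((k+n+m)!/(k!·(k+m)!·(n−m−k)!))·(H_{k+m} − H_k) · ((x+1)/2)^k, where H_{k+m} − H_k = ψ(k+m+1) − ψ(k+1). -/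
open Finset Real

open Polynomial in
lemma legendreP_eq_s6 (n : ℕ) (x : ℝ) : legendreP n x =
    ∑ k ∈ Finset.range (n + 1), ((-1 : ℝ) ^ (n + k) * (((n + k).factorial : ℝ) /
      (((k.factorial : ℝ)) ^ 2 * ((n - k).factorial : ℝ))) / 2 ^ k) * (x + 1) ^ k := by
  have key : ∀ k ∈ Finset.range (n + 1), ((n + k).factorial : ℝ) /
      (((k.factorial : ℝ)) ^ 2 * ((n - k).factorial : ℝ)) = (n.choose k : ℝ) * (n + k).choose n := by
    intro k hk
    have hk' : k ≤ n := by simpa [Nat.lt_succ_iff] using hk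
    rw [Nat.cast_choose ℝ hk', Nat.cast_choose ℝ (Nat.le_add_right n k), Nat.add_sub_cancel_left]
    have h1 : (n.factorial : ℝ) ≠ 0 := by positivity
    have h2 : (k.factorial : ℝ) ≠ 0 := by positivity
    have h3 : ((n - k).factorial : ℝ) ≠ 0 := by positivity
    field_simp
  have h := shiftedLegendre_eval_symm n ((1 - x) / 2)
  rw [shiftedLegendre] at h
  simp only [map_sum, map_mul, map_pow, aeval_X, map_neg, map_one, map_natCast] at h
  have hl : legendreP n x = ∑ k ∈ Finset.range (n + 1),
      (-1 : ℝ) ^ k * (n.choose k : ℝ) * ((n + k).choose n : ℝ) * ((1 - x) / 2) ^ k := by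
    unfold legendreP
    refine Finset.sum_congr rfl fun k hk => ?_
    rw [key k hk, show (x - 1) / 2 = (-1) * ((1 - x) / 2) by ring, mul_pow]
    ring
  rw [hl]
  rw [h, Finset.mul_sum]
  refine Finset.sum_congr rfl fun k hk => ?_
  rw [key k hk, show 1 - (1 - x) / 2 = (x + 1) / 2 by ring, div_pow, pow_add]
  ring

lemma iter_eq (f : ℝ → ℝ) (F : ℕ → ℝ → ℝ) (h0 : ∀ x, -1 < x → f x = F 0 x)
    (h : ∀ m x, -1 < x → HasDerivAt (F m) (F (m + 1) x) x) (m : ℕ) :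
    ∀ x, -1 < x → iteratedDeriv m f x = F m x := by
  induction m with
  | zero => simpa using h0
  | succ m ih =>
    intro x hx
    rw [iteratedDeriv_succ]
    have : iteratedDeriv m f =ᶠ[nhds x] F m := by
      filter_upwards [Ioi_mem_nhds hx] with y hy using ih y hy
    rw [this.deriv_eq, (h m x hx).deriv]

lemma hasDerivAt_poly (m k : ℕ) (x : ℝ) :
    HasDerivAt (fun y : ℝ => (k.descFactorial m : ℝ) * (y + 1) ^ (k - m))
      ((k.descFactorial (m + 1) : ℝ) * (x + 1) ^ (k - (m + 1))) x := by
  have := ((((hasDerivAt_id x).add_const 1).pow (k - m)).const_mul (k.descFactorial m : ℝ))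
  refine this.congr_deriv ?_
  rw [Nat.descFactorial_succ, show k - m - 1 = k - (m + 1) by omega]
  push_cast
  simp
  ring

/-- the `m`-th derivative of `(y+1)^k log (y+1)` minus the log term -/
noncomputable def GG (m k : ℕ) (y : ℝ) : ℝ :=
  if m ≤ k then (k.descFactorial m : ℝ) * (y + 1) ^ (k - m) * (harm k - harm (k - m))
  else -(-1 : ℝ) ^ (m + k) * (k.factorial : ℝ) * ((m - k - 1).factorial : ℝ) * ((y + 1) ^ (m - k))⁻¹

lemma harm_succ (i : ℕ) : harm (i + 1) = harm i + 1 / ((i : ℝ) + 1) := by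
  simp [harm, Finset.sum_range_succ]

lemma hasDerivAt_GG (m k : ℕ) (x : ℝ) (hx : -1 < x) :
    HasDerivAt (fun y : ℝ => (k.descFactorial m : ℝ) * (y + 1) ^ (k - m) * Real.log (y + 1) + GG m k y)
      ((k.descFactorial (m + 1) : ℝ) * (x + 1) ^ (k - (m + 1)) * Real.log (x + 1) + GG (m + 1) k x) x := by
  have hp : x + 1 ≠ 0 := by linarith
  have hid : HasDerivAt (fun y : ℝ => y + 1) 1 x := (hasDerivAt_id x).add_const 1
  have h1 := (hasDerivAt_poly m k x).mul (hid.log hp)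
  rcases lt_trichotomy m k with hlt | rfl | hgt
  · obtain ⟨j, rfl⟩ : ∃ j, k = m + 1 + j := ⟨k - (m + 1), by omega⟩
    have e1 : m + 1 + j - m = j + 1 := by omega
    have e2 : m + 1 + j - (m + 1) = j := by omega
    have h2 := (hasDerivAt_poly m (m + 1 + j) x).mul_const (harm (m + 1 + j) - harm (m + 1 + j - m))
    have hG : GG m (m + 1 + j) = fun y => ((m + 1 + j).descFactorial m : ℝ) * (y + 1) ^ (m + 1 + j - m) *
        (harm (m + 1 + j) - harm (m + 1 + j - m)) := by
      funext y; rw [GG, if_pos (by omega)]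
    rw [hG]
    refine (h1.add h2).congr_deriv ?_
    rw [GG, if_pos (by omega), e1, e2, harm_succ j, Nat.descFactorial_succ, e1]
    have : (j : ℝ) + 1 ≠ 0 := by positivity
    push_cast
    field_simp
    ring
  · have hG : GG m m = fun y => (m.descFactorial m : ℝ) * (y + 1) ^ (m - m) *
        (harm m - harm (m - m)) := by
      funext y; rw [GG, if_pos le_rfl]
    have h2 := (hasDerivAt_poly m m x).mul_const (harm m - harm (m - m))
    rw [hG]
    refine (h1.add h2).congr_deriv ?_
    rw [GG, if_neg (by omega)]
    have hs : (-1 : ℝ) ^ (m + 1 + m) = -1 := by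
      rw [show m + 1 + m = 2 * m + 1 by ring, pow_succ, pow_mul]; simp
    rw [hs]
    simp [Nat.descFactorial_self]
  · obtain ⟨j, rfl⟩ : ∃ j, m = k + 1 + j := ⟨m - (k + 1), by omega⟩
    have hG : GG (k + 1 + j) k = fun y => -(-1 : ℝ) ^ (k + 1 + j + k) * (k.factorial : ℝ) *
        (j.factorial : ℝ) * ((y + 1) ^ (j + 1))⁻¹ := by
      funext y
      rw [GG, if_neg (by omega), show k + 1 + j - k = j + 1 by omega, Nat.add_sub_cancel]
    have h2 := ((hid.pow (j + 1)).inv (pow_ne_zero _ hp)).const_mul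
      (-(-1 : ℝ) ^ (k + 1 + j + k) * (k.factorial : ℝ) * (j.factorial : ℝ))
    rw [hG]
    refine (h1.add h2).congr_deriv ?_
    rw [GG, if_neg (by omega), show k + 1 + j + 1 - k = j + 2 by omega,
      show j + 2 - 1 = j + 1 by omega, Nat.factorial_succ,
      Nat.descFactorial_of_lt (show k < k + 1 + j + 1 by omega),
      Nat.descFactorial_of_lt (show k < k + 1 + j by omega)]
    simp only [Pi.pow_apply, Nat.add_sub_cancel]
    push_cast
    rw [show k + 1 + j + 1 + k = (k + 1 + j + k) + 1 by ring, pow_succ (-1 : ℝ)]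
    field_simp
    ring

theorem stmt_6 (m n : ℕ) (hmn : m ≤ n) (x : ℝ) (hx : 1 < x) :
    iteratedDeriv m (fun y => legendreP n y * Real.log (y + 1)) x =
      iteratedDeriv m (legendreP n) x * Real.log (x + 1)
      - (-1 : ℝ) ^ (n + m) * (x + 1) ^ (-(m : ℤ)) *
          ∑ k ∈ Finset.range m,
            (((k + n).factorial : ℝ) * ((m - k - 1).factorial : ℝ)) /
                ((k.factorial : ℝ) * ((n - k).factorial : ℝ)) * ((x + 1) / 2) ^ k
      + (-1 : ℝ) ^ (n + m) * (2 : ℝ) ^ (-(m : ℤ)) *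
          ∑ k ∈ Finset.range (n - m + 1),
            (-1 : ℝ) ^ k * ((k + n + m).factorial : ℝ) /
                ((k.factorial : ℝ) * ((k + m).factorial : ℝ) * ((n - m - k).factorial : ℝ)) *
              (harm (k + m) - harm k) * ((x + 1) / 2) ^ k := by
  set c : ℕ → ℝ := fun k => ((-1 : ℝ) ^ (n + k) * (((n + k).factorial : ℝ) /
      (((k.factorial : ℝ)) ^ 2 * ((n - k).factorial : ℝ))) / 2 ^ k) with hc
  have hL : ∀ y, legendreP n y = ∑ k ∈ Finset.range (n + 1), c k * (y + 1) ^ k := legendreP_eq_s6 n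
  have hx1 : -1 < x := by linarith
  have hp : x + 1 ≠ 0 := by linarith
  have A := iter_eq (fun y => legendreP n y * Real.log (y + 1))
    (fun m y => ∑ k ∈ Finset.range (n + 1), c k *
      ((k.descFactorial m : ℝ) * (y + 1) ^ (k - m) * Real.log (y + 1) + GG m k y))
    (by
      intro y _
      simp only [hL, Finset.sum_mul]
      refine Finset.sum_congr rfl fun k _ => ?_
      simp [GG]
      ring)
    (fun m y hy => HasDerivAt.fun_sum fun k _ => (hasDerivAt_GG m k y hy).const_mul (c k)) m x hx1
  have B := iter_eq (legendreP n)
    (fun m y => ∑ k ∈ Finset.range (n + 1), c k *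
      ((k.descFactorial m : ℝ) * (y + 1) ^ (k - m)))
    (by intro y _; simp [hL])
    (fun m y _ => HasDerivAt.fun_sum fun k _ => (hasDerivAt_poly m k y).const_mul (c k)) m x hx1
  rw [A, B]
  have hsplit : ∑ k ∈ Finset.range (n + 1), c k * GG m k x =
      (∑ k ∈ Finset.range m, c k * GG m k x) +
      ∑ k ∈ Finset.range (n - m + 1), c (m + k) * GG m (m + k) x := by
    rw [← Finset.sum_range_add, show m + (n - m + 1) = n + 1 by omega]
  simp only [mul_add, Finset.sum_add_distrib]
  rw [hsplit, Finset.sum_mul, sub_eq_add_neg, add_assoc, Finset.mul_sum, Finset.mul_sum,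
    ← Finset.sum_neg_distrib]
  congr 1
  · exact Finset.sum_congr rfl fun k _ => by ring
  congr 1
  · refine Finset.sum_congr rfl fun k hk => ?_
    have hk' : k < m := by simpa using hk
    obtain ⟨j, rfl⟩ : ∃ j, m = k + 1 + j := ⟨m - (k + 1), by omega⟩
    have e1 : k + 1 + j - k = j + 1 := by omega
    rw [GG, if_neg (by omega), e1, Nat.add_sub_cancel, hc, zpow_neg, zpow_natCast, div_pow,
      add_comm k n]
    have h2 : (k.factorial : ℝ) ≠ 0 := by positivity
    have h3 : ((n - k).factorial : ℝ) ≠ 0 := by positivity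
    have hs : (-1 : ℝ) ^ (n + k) * (-1 : ℝ) ^ (k + 1 + j + k) = (-1 : ℝ) ^ (n + (k + 1 + j)) := by
      rw [← pow_add, show n + k + (k + 1 + j + k) = n + (k + 1 + j) + 2 * k by ring, pow_add, pow_mul]
      simp
    rw [← hs]
    have hu : (x + 1) ^ (k + 1 + j) = (x + 1) ^ k * (x + 1) ^ (j + 1) := by ring
    rw [hu]
    field_simp
  · refine Finset.sum_congr rfl fun k hk => ?_
    have hk' : k ≤ n - m := by simpa [Nat.lt_succ_iff] using hk
    rw [GG, if_pos (by omega), Nat.add_sub_cancel_left, hc, zpow_neg, zpow_natCast, div_pow]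
    have hd : ((m + k).descFactorial m : ℝ) = (m + k).factorial / k.factorial := by
      rw [eq_div_iff (by positivity)]
      have := Nat.factorial_mul_descFactorial (Nat.le_add_right m k)
      rw [Nat.add_sub_cancel_left] at this
      rw [mul_comm]
      exact_mod_cast this
    have h1 : (k.factorial : ℝ) ≠ 0 := by positivity
    have h2 : ((m + k).factorial : ℝ) ≠ 0 := by positivity
    have h3 : ((n - m - k).factorial : ℝ) ≠ 0 := by positivity
    simp only []
    rw [hd, show n - (m + k) = n - m - k by omega, add_comm k m,
      show k + n + m = n + (m + k) by ring, show n + (m + k) = n + m + k by ring, pow_add _ (n + m) k,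
      pow_add 2 m k]
    field_simp
end

section
/- Let m, n be natural numbers with m > n, and let x > 1 be real. Then d^m/dx^m [P_n(x)·log(x+1)] = (−1)^{n+m+1}·(n+m)!·(m−n−1)!·(x+1)^{−m} Σ_{j=0}^{n} ((n+j)!/((n−j)!·(m+j)!·j!))·((x−1)/2)^j. -/
open Finset Real

lemma aux_vander (a b N : ℕ) :
    ∑ i ∈ Finset.range (N + 1), ((a + i).choose a : ℝ) * ((b + (N - i)).choose b : ℝ)
      = ((a + b + 1 + N).choose (a + b + 1) : ℝ) := by
  have h : (PowerSeries.mk 1 : PowerSeries ℝ) ^ (a + 1) * (PowerSeries.mk 1) ^ (b + 1)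
      = (PowerSeries.mk 1) ^ (a + b + 1 + 1) := by
    rw [← pow_add]; congr 1; ring
  rw [PowerSeries.mk_one_pow_eq_mk_choose_add, PowerSeries.mk_one_pow_eq_mk_choose_add,
    PowerSeries.mk_one_pow_eq_mk_choose_add] at h
  have h2 := congrArg (PowerSeries.coeff N) h
  rw [PowerSeries.coeff_mul, Finset.Nat.sum_antidiagonal_eq_sum_range_succ_mk] at h2
  simpa using h2

lemma aux_choose (a i : ℕ) : ((a + i).choose a : ℝ) =
    ((a + i).factorial : ℝ) / ((a.factorial : ℝ) * (i.factorial : ℝ)) := by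
  rw [Nat.cast_choose ℝ (Nat.le_add_right a i), Nat.add_sub_cancel_left]

lemma aux_coeff (j N b : ℕ) :
    ∑ k ∈ Finset.range (j + N + 1),
      ((j + N + k).factorial : ℝ) * ((j + N + 1 + b - k - 1).factorial : ℝ) /
        ((k.factorial : ℝ) * ((j + N - k).factorial : ℝ)) * (k.choose j : ℝ)
    = ((j + N + (j + N + 1 + b)).factorial : ℝ) * (b.factorial : ℝ) *
      (((j + N + j).factorial : ℝ) /
        ((N.factorial : ℝ) * ((j + N + 1 + b + j).factorial : ℝ) * (j.factorial : ℝ))) := by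
  rw [add_assoc j N 1, Finset.sum_range_add, Finset.sum_eq_zero, zero_add]
  · have hv := aux_vander (j + N + j) b N
    rw [aux_choose] at hv
    have : ∀ i ∈ Finset.range (N + 1),
        ((j + N + (j + i)).factorial : ℝ) * ((j + (N + 1) + b - (j + i) - 1).factorial : ℝ) /
        (((j + i).factorial : ℝ) * ((j + N - (j + i)).factorial : ℝ)) * ((j + i).choose j : ℝ)
        = ((j + N + j).factorial : ℝ) * (b.factorial : ℝ) / (j.factorial : ℝ) *
         (((j + N + j + i).choose (j + N + j) : ℝ) * ((b + (N - i)).choose b : ℝ)) := by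
      intro i hi
      have hi : i ≤ N := by simpa [Nat.lt_succ_iff] using hi
      obtain ⟨r, rfl⟩ := Nat.exists_eq_add_of_le hi
      rw [aux_choose, aux_choose, aux_choose]
      rw [show j + (i + r + 1) + b - (j + i) - 1 = b + r by omega,
        show j + (i + r) - (j + i) = r by omega, show i + r - i = r by omega,
        show j + (i + r) + (j + i) = j + (i + r) + j + i by omega]
      have := Nat.factorial_ne_zero
      field_simp
    rw [Finset.sum_congr rfl this, ← Finset.mul_sum, hv]
    rw [show j + N + j + b + 1 + N = j + N + (j + (N + 1) + b) by omega,
      show j + N + j + b + 1 = j + (N + 1) + b + j by omega]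
    field_simp
  · intro k hk
    rw [Nat.choose_eq_zero_of_lt (by simpa using hk)]; simp

lemma aux_sum (n b : ℕ) (u : ℝ) :
    ∑ k ∈ Finset.range (n + 1),
      ((n + k).factorial : ℝ) * ((n + 1 + b - k - 1).factorial : ℝ) /
        ((k.factorial : ℝ) * ((n - k).factorial : ℝ)) * (u + 1) ^ k
    = ((n + (n + 1 + b)).factorial : ℝ) * (b.factorial : ℝ) *
      ∑ j ∈ Finset.range (n + 1), ((n + j).factorial : ℝ) /
        (((n - j).factorial : ℝ) * ((n + 1 + b + j).factorial : ℝ) * (j.factorial : ℝ)) * u ^ j := by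
  have h1 : ∀ k ∈ Finset.range (n + 1), (u + 1) ^ k =
      ∑ j ∈ Finset.range (n + 1), (k.choose j : ℝ) * u ^ j := by
    intro k hk
    rw [add_pow]
    have hk : k + 1 ≤ n + 1 := by simpa [Nat.succ_le_iff] using hk
    rw [← Finset.sum_subset (Finset.range_mono hk)]
    · apply Finset.sum_congr rfl; intros; simp; ring
    · intro j _ hj
      rw [Nat.choose_eq_zero_of_lt (by simpa [Nat.succ_le_iff] using hj)]; simp
  rw [Finset.sum_congr rfl (fun k hk => by rw [h1 k hk, Finset.mul_sum]), Finset.sum_comm,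
    Finset.mul_sum]
  apply Finset.sum_congr rfl
  intro j hj
  have hj : j ≤ n := by simpa [Nat.lt_succ_iff] using hj
  obtain ⟨N, rfl⟩ := Nat.exists_eq_add_of_le hj
  have := aux_coeff j N b
  simp_rw [← mul_assoc]
  rw [← Finset.sum_mul, this, show j + N - j = N by omega]

lemma aux_deriv (m : ℕ) : ∀ (k : ℕ), k < m → ∀ s : ℝ, 0 < s →
    iteratedDeriv m (fun y => y ^ k * Real.log y) s =
      (-1 : ℝ) ^ (m + k + 1) * (k.factorial : ℝ) * ((m - k - 1).factorial : ℝ) *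
        s ^ k * s ^ (-(m : ℤ)) := by
  induction m with
  | zero => intro k hk; omega
  | succ m ih =>
    intro k hk s hs
    rw [iteratedDeriv_succ']
    cases k with
    | zero =>
      have : deriv (fun y : ℝ => y ^ 0 * Real.log y) = Inv.inv := by
        simp [Real.deriv_log']
      rw [this, iteratedDeriv_eq_iterate, iter_deriv_inv]
      simp only [Nat.cast_add, Nat.cast_one, neg_add_rev, pow_succ]
      simp [sub_eq_add_neg]
    | succ k =>
      have he : deriv (fun y : ℝ => y ^ (k + 1) * Real.log y) =ᶠ[nhds s]
          fun y => ((k : ℝ) + 1) * (y ^ k * Real.log y) + y ^ k := by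
        filter_upwards [lt_mem_nhds hs] with y hy
        have h := (hasDerivAt_pow (k + 1) y).mul (Real.hasDerivAt_log hy.ne')
        refine h.deriv.trans ?_
        simp only [Nat.cast_add, Nat.cast_one, Nat.add_sub_cancel]
        field_simp
        ring
      have hc : ContDiffAt ℝ m (fun y : ℝ => y ^ k * Real.log y) s :=
        (contDiffAt_id.pow k).mul (Real.contDiffAt_log.2 hs.ne')
      have hp : ContDiffAt ℝ m (fun y : ℝ => y ^ k) s := contDiffAt_id.pow k
      rw [he.iteratedDeriv_eq]
      have hadd := iteratedDeriv_add (n := m) (x := s) (contDiffAt_const (c := (k : ℝ) + 1) |>.mul hc) hp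
      have hkm : k < m := by omega
      refine hadd.trans ?_
      have h3 := iteratedDeriv_const_mul ((k : ℝ) + 1) hc
      have h4 := iteratedDeriv_pow (x := s) k m
      rw [Nat.descFactorial_of_lt hkm] at h4
      refine (congrArg₂ (· + ·) h3 h4).trans ?_
      rw [ih k hkm s hs, show m + 1 - (k + 1) - 1 = m - k - 1 by omega, Nat.factorial_succ,
        show (-((m + 1 : ℕ) : ℤ)) = -(m : ℤ) - 1 by push_cast; ring, zpow_sub_one₀ hs.ne']
      push_cast
      field_simp
      ring

lemma aux_legendre (n : ℕ) (y : ℝ) : legendreP n y =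
    ∑ k ∈ Finset.range (n + 1), ((-1 : ℝ) ^ (n + k) *
      (((n + k).factorial : ℝ) / (((k.factorial : ℝ)) ^ 2 * ((n - k).factorial : ℝ))) / 2 ^ k) *
      (y + 1) ^ k := by
  have hs := Polynomial.shiftedLegendre_eval_symm n ((1 - y) / 2 : ℝ)
  have hev : ∀ z : ℝ, Polynomial.aeval z (Polynomial.shiftedLegendre n) =
      ∑ k ∈ Finset.range (n + 1), (-1 : ℝ) ^ k *
      (((n + k).factorial : ℝ) / (((k.factorial : ℝ)) ^ 2 * ((n - k).factorial : ℝ))) * z ^ k := by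
    intro z
    simp only [Polynomial.shiftedLegendre, map_sum, map_mul, Polynomial.aeval_C, map_pow,
      Polynomial.aeval_X]
    apply Finset.sum_congr rfl
    intro k hk
    have hk : k ≤ n := by simpa [Nat.lt_succ_iff] using hk
    simp only [algebraMap_int_eq, eq_intCast]
    push_cast
    rw [aux_choose, Nat.cast_choose ℝ hk]
    have := Nat.factorial_ne_zero
    field_simp
  rw [hev, hev] at hs
  have h1 : legendreP n y = ∑ k ∈ Finset.range (n + 1), (-1 : ℝ) ^ k *
      (((n + k).factorial : ℝ) / (((k.factorial : ℝ)) ^ 2 * ((n - k).factorial : ℝ))) *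
      ((1 - y) / 2) ^ k := by
    unfold legendreP
    apply Finset.sum_congr rfl
    intro k _
    rw [show (y - 1) / 2 = (-1) * ((1 - y) / 2) by ring, mul_pow]
    ring
  rw [h1, hs, Finset.mul_sum]
  apply Finset.sum_congr rfl
  intro k _
  rw [show 1 - (1 - y) / 2 = (y + 1) / 2 by ring, div_pow, pow_add]
  ring

theorem stmt_10 (m n : ℕ) (hmn : n < m) (x : ℝ) (hx : 1 < x) :
    iteratedDeriv m (fun y => legendreP n y * Real.log (y + 1)) x =
      (-1 : ℝ) ^ (n + m + 1) * ((n + m).factorial : ℝ) * ((m - n - 1).factorial : ℝ) *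
        (x + 1) ^ (-(m : ℤ)) *
        ∑ j ∈ Finset.range (n + 1),
          ((n + j).factorial : ℝ) /
              (((n - j).factorial : ℝ) * ((m + j).factorial : ℝ) * (j.factorial : ℝ)) *
            ((x - 1) / 2) ^ j := by
  obtain ⟨b, rfl⟩ := Nat.exists_eq_add_of_le (Nat.succ_le_of_lt hmn)
  simp only [Nat.succ_eq_add_one] at *
  have hs : 0 < x + 1 := by linarith
  have hb : n + 1 + b - n - 1 = b := by omega
  rw [hb]
  set m := n + 1 + b with hm
  have hf : (fun y => legendreP n y * Real.log (y + 1)) = fun y =>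
      (fun z => ∑ k ∈ Finset.range (n + 1), ((-1 : ℝ) ^ (n + k) *
      (((n + k).factorial : ℝ) / (((k.factorial : ℝ)) ^ 2 * ((n - k).factorial : ℝ))) / 2 ^ k) *
      (z ^ k * Real.log z)) (y + 1) := by
    funext y
    rw [aux_legendre, Finset.sum_mul]
    simp only [mul_assoc]
  rw [hf]
  have hshift : ∀ F : ℝ → ℝ, iteratedDeriv m (fun y => F (y + 1)) x = iteratedDeriv m F (x + 1) :=
    fun F => by rw [iteratedDeriv_comp_add_const]
  refine (hshift (fun z => ∑ k ∈ Finset.range (n + 1), ((-1 : ℝ) ^ (n + k) *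
      (((n + k).factorial : ℝ) / (((k.factorial : ℝ)) ^ 2 * ((n - k).factorial : ℝ))) / 2 ^ k) *
      (z ^ k * Real.log z))).trans ?_
  have hc : ∀ k : ℕ, ContDiffAt ℝ m (fun y : ℝ => y ^ k * Real.log y) (x + 1) := fun k =>
    (contDiffAt_id.pow k).mul (Real.contDiffAt_log.2 hs.ne')
  rw [iteratedDeriv_fun_sum (fun k _ => contDiffAt_const.mul (hc k))]
  have hsum := aux_sum n b ((x - 1) / 2)
  rw [← hm] at hsum
  rw [show ∀ a c d e f : ℝ, a * c * d * e * f = a * e * (c * d * f) by intros; ring, ← hsum,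
    Finset.mul_sum]
  apply Finset.sum_congr rfl
  intro k hk
  have hk : k < m := by have := Finset.mem_range.1 hk; omega
  rw [iteratedDeriv_const_mul _ (hc k), aux_deriv m k hk _ hs,
    show (x - 1) / 2 + 1 = (x + 1) / 2 by ring, div_pow]
  have h1 : (-1 : ℝ) ^ (n + k) * (-1) ^ (m + k + 1) = (-1) ^ (n + m + 1) := by
    rw [← pow_add, show n + k + (m + k + 1) = (n + m + 1) + 2 * k by ring, pow_add, pow_mul]
    simp
  rw [← h1]
  have := Nat.factorial_ne_zero
  field_simp
end
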